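/- arXiv:1705.08074 — 2 statements merged into one kernel-verified Lean document; each statement's English description precedes it below -/
import Mathlib

section
/- There exists a symmetric measure that is universally optimal among all measures. Moreover, for any measure ξ, its symmetrization ξ* — the measure with weights p*_s = (t!)⁻¹ Σ_σ p_{σ∘s}, the sum running over all permutations σ of the treatments — is a symmetric measure, and for every function Φ from t×t real symmetric matrices to ℝ that is concave, nondecreasing with respect to the Loewner order and invariant under simultaneous permutation of rows and columns, and for all generalized inverses G*, G of C_{ξ*11}, C_{ξ11} respectively, one has Φ(C_{ξ*00} − C_{ξ*01}G*C_{ξ*10}) ≥ Φ(C_{ξ00} − C_{ξ01}GC_{ξ10}). -/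
open Matrix

namespace TwoDim

/-- The set of plots of an `a × b` block. -/
abbrev Plot (a b : ℕ) := Fin a × Fin b

/-- A block array: an assignment of one of `t` treatments to each plot. -/
abbrev BlockArray (a b t : ℕ) := Plot a b → Fin t

/-- The all-ones matrix. -/
def Jmat (n : Type*) : Matrix n n ℝ := Matrix.of fun _ _ => 1

/-- `B_m = I - J/m`. -/
noncomputable def Bmat (n : Type*) [Fintype n] [DecidableEq n] : Matrix n n ℝ :=
  1 - ((Fintype.card n : ℝ))⁻¹ • Jmat n

variable {a b t : ℕ}

/-- The treatment incidence matrix `T_s`. -/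
def Tmat (s : BlockArray a b t) : Matrix (Plot a b) (Fin t) ℝ :=
  Matrix.of fun q k => if s q = k then 1 else 0

/-- Two plots are neighbors if they agree in one coordinate and differ by 1 in the other. -/
def Neighbor (q r : Plot a b) : Prop :=
  (q.1 = r.1 ∧ (q.2.val + 1 = r.2.val ∨ r.2.val + 1 = q.2.val)) ∨
  (q.2 = r.2 ∧ (q.1.val + 1 = r.1.val ∨ r.1.val + 1 = q.1.val))

instance (q r : Plot a b) : Decidable (Neighbor q r) := by
  unfold Neighbor; infer_instance

/-- The adjacency matrix of the neighbor relation. -/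
def Mmat (a b : ℕ) : Matrix (Plot a b) (Plot a b) ℝ :=
  Matrix.of fun q r => if Neighbor q r then 1 else 0

/-- `F_s = M T_s`. -/
def Fmat (s : BlockArray a b t) : Matrix (Plot a b) (Fin t) ℝ :=
  Mmat a b * Tmat s

/-- `B̃ = Σ⁻¹ − Σ⁻¹ J Σ⁻¹ / (1'Σ⁻¹1)`. -/
noncomputable def Btilde (Sig : Matrix (Plot a b) (Plot a b) ℝ) :
    Matrix (Plot a b) (Plot a b) ℝ :=
  Sig⁻¹ - (∑ i, ∑ j, Sig⁻¹ i j)⁻¹ • (Sig⁻¹ * Jmat (Plot a b) * Sig⁻¹)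

/-- `C_{s00} = T_s' W T_s` (with `W` playing the role of `B̃`). -/
def Cs00 (W : Matrix (Plot a b) (Plot a b) ℝ) (s : BlockArray a b t) :
    Matrix (Fin t) (Fin t) ℝ := (Tmat s)ᵀ * W * Tmat s

/-- `C_{s01} = T_s' W F_s`. -/
def Cs01 (W : Matrix (Plot a b) (Plot a b) ℝ) (s : BlockArray a b t) :
    Matrix (Fin t) (Fin t) ℝ := (Tmat s)ᵀ * W * Fmat s

/-- `C_{s11} = F_s' W F_s`. -/
def Cs11 (W : Matrix (Plot a b) (Plot a b) ℝ) (s : BlockArray a b t) :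
    Matrix (Fin t) (Fin t) ℝ := (Fmat s)ᵀ * W * Fmat s

/-- `c_{s00} = tr(B_t C_{s00})`. -/
noncomputable def cs00 (W : Matrix (Plot a b) (Plot a b) ℝ) (s : BlockArray a b t) : ℝ :=
  Matrix.trace (Bmat (Fin t) * Cs00 W s)

noncomputable def cs01 (W : Matrix (Plot a b) (Plot a b) ℝ) (s : BlockArray a b t) : ℝ :=
  Matrix.trace (Bmat (Fin t) * Cs01 W s)

noncomputable def cs11 (W : Matrix (Plot a b) (Plot a b) ℝ) (s : BlockArray a b t) : ℝ :=
  Matrix.trace (Bmat (Fin t) * Cs11 W s)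

/-- The quadratic `q_s(x) = c_{s00} + 2 c_{s01} x + c_{s11} x²`. -/
noncomputable def qpoly (W : Matrix (Plot a b) (Plot a b) ℝ) (s : BlockArray a b t) (x : ℝ) : ℝ :=
  cs00 W s + 2 * cs01 W s * x + cs11 W s * x ^ 2

/-- A measure on the set of block arrays: nonnegative weights summing to one. -/
def IsMeasure (ξ : BlockArray a b t → ℝ) : Prop :=
  (∀ s, 0 ≤ ξ s) ∧ ∑ s, ξ s = 1

noncomputable def Cm00 (W : Matrix (Plot a b) (Plot a b) ℝ) (ξ : BlockArray a b t → ℝ) :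
    Matrix (Fin t) (Fin t) ℝ := ∑ s, ξ s • Cs00 W s

noncomputable def Cm01 (W : Matrix (Plot a b) (Plot a b) ℝ) (ξ : BlockArray a b t → ℝ) :
    Matrix (Fin t) (Fin t) ℝ := ∑ s, ξ s • Cs01 W s

noncomputable def Cm11 (W : Matrix (Plot a b) (Plot a b) ℝ) (ξ : BlockArray a b t → ℝ) :
    Matrix (Fin t) (Fin t) ℝ := ∑ s, ξ s • Cs11 W s

noncomputable def cm00 (W : Matrix (Plot a b) (Plot a b) ℝ) (ξ : BlockArray a b t → ℝ) : ℝ :=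
  ∑ s, ξ s * cs00 W s

noncomputable def cm01 (W : Matrix (Plot a b) (Plot a b) ℝ) (ξ : BlockArray a b t → ℝ) : ℝ :=
  ∑ s, ξ s * cs01 W s

noncomputable def cm11 (W : Matrix (Plot a b) (Plot a b) ℝ) (ξ : BlockArray a b t → ℝ) : ℝ :=
  ∑ s, ξ s * cs11 W s

/-- `q*_ξ = c_{ξ00} − c_{ξ01}²/c_{ξ11}`. -/
noncomputable def qstar (W : Matrix (Plot a b) (Plot a b) ℝ) (ξ : BlockArray a b t → ℝ) : ℝ :=
  cm00 W ξ - (cm01 W ξ) ^ 2 / cm11 W ξ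

/-- `G` is a generalized inverse of `A`. -/
def IsGenInv (A G : Matrix (Fin t) (Fin t) ℝ) : Prop := A * G * A = A

/-- Information matrix `C_{ξ00} − C_{ξ01} G C_{ξ10}` computed with a generalized inverse `G`. -/
noncomputable def InfoMat (W : Matrix (Plot a b) (Plot a b) ℝ) (ξ : BlockArray a b t → ℝ)
    (G : Matrix (Fin t) (Fin t) ℝ) : Matrix (Fin t) (Fin t) ℝ :=
  Cm00 W ξ - Cm01 W ξ * G * (Cm01 W ξ)ᵀ

/-- A criterion `Φ` on `t×t` real symmetric matrices: concave, Loewner-nondecreasing, and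
invariant under simultaneous permutations of rows and columns. -/
def GoodPhi (t : ℕ) (Φ : Matrix (Fin t) (Fin t) ℝ → ℝ) : Prop :=
  (∀ A B : Matrix (Fin t) (Fin t) ℝ, A.IsSymm → B.IsSymm → ∀ α : ℝ, 0 ≤ α → α ≤ 1 →
      α * Φ A + (1 - α) * Φ B ≤ Φ (α • A + (1 - α) • B)) ∧
  (∀ A B : Matrix (Fin t) (Fin t) ℝ, A.IsSymm → B.IsSymm → (B - A).PosSemidef → Φ A ≤ Φ B) ∧
  (∀ (σ : Equiv.Perm (Fin t)) (C : Matrix (Fin t) (Fin t) ℝ), Φ (C.submatrix σ σ) = Φ C)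

/-- Universal optimality of a measure `ξ`. -/
def UnivOptimal (W : Matrix (Plot a b) (Plot a b) ℝ) (ξ : BlockArray a b t → ℝ) : Prop :=
  ∀ η : BlockArray a b t → ℝ, IsMeasure η →
    ∀ G H : Matrix (Fin t) (Fin t) ℝ, IsGenInv (Cm11 W ξ) G → IsGenInv (Cm11 W η) H →
      ∀ Φ : Matrix (Fin t) (Fin t) ℝ → ℝ, GoodPhi t Φ →
        Φ (InfoMat W η H) ≤ Φ (InfoMat W ξ G)

/-- A measure is symmetric if it is invariant under relabeling of the treatments. -/
def IsSymmetricMeasure (ξ : BlockArray a b t → ℝ) : Prop :=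
  ∀ (σ : Equiv.Perm (Fin t)) (s : BlockArray a b t), ξ (fun q => σ (s q)) = ξ s

/-- A matrix is completely symmetric if it is of the form `αI + βJ`. -/
def ComplSym (A : Matrix (Fin t) (Fin t) ℝ) : Prop :=
  ∃ α β : ℝ, A = α • (1 : Matrix (Fin t) (Fin t) ℝ) + β • Jmat (Fin t)

/-- A measure is pseudo symmetric if `C_{ξ00}`, `C_{ξ01}`, `C_{ξ11}` are completely symmetric. -/
def PseudoSym (W : Matrix (Plot a b) (Plot a b) ℝ) (ξ : BlockArray a b t → ℝ) : Prop :=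
  ComplSym (Cm00 W ξ) ∧ ComplSym (Cm01 W ξ) ∧ ComplSym (Cm11 W ξ)

/-- `r(x) = max_{s∈S} q_s(x)`. -/
noncomputable def rfun {a b : ℕ} (t : ℕ) (W : Matrix (Plot a b) (Plot a b) ℝ) (x : ℝ) : ℝ :=
  sSup (Set.range fun s : BlockArray a b t => qpoly W s x)

/-- `min_{s∈S} q_s(x)`. -/
noncomputable def rmin {a b : ℕ} (t : ℕ) (W : Matrix (Plot a b) (Plot a b) ℝ) (x : ℝ) : ℝ :=
  sInf (Set.range fun s : BlockArray a b t => qpoly W s x)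

/-- Number of plots assigned treatment `k` by `s`. -/
noncomputable def f0 (s : BlockArray a b t) (k : Fin t) : ℕ :=
  {q : Plot a b | s q = k}.ncard

/-- Replications of `k` among the columns `1,…,b−1`. -/
noncomputable def f1 (s : BlockArray a b t) (k : Fin t) : ℕ :=
  {q : Plot a b | s q = k ∧ q.2.val + 1 < b}.ncard

/-- Replications of `k` among the columns `2,…,b`. -/
noncomputable def f2 (s : BlockArray a b t) (k : Fin t) : ℕ :=
  {q : Plot a b | s q = k ∧ 1 ≤ q.2.val}.ncard

/-- Replications of `k` among the rows `1,…,a−1`. -/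
noncomputable def f3 (s : BlockArray a b t) (k : Fin t) : ℕ :=
  {q : Plot a b | s q = k ∧ q.1.val + 1 < a}.ncard

/-- Replications of `k` among the rows `2,…,a`. -/
noncomputable def f4 (s : BlockArray a b t) (k : Fin t) : ℕ :=
  {q : Plot a b | s q = k ∧ 1 ≤ q.1.val}.ncard

noncomputable def fc (s : BlockArray a b t) : ℕ → Fin t → ℕ
  | 0 => f0 s
  | 1 => f1 s
  | 2 => f2 s
  | 3 => f3 s
  | 4 => f4 s
  | _ => fun _ => 0

/-- `h^{uv}_s = Σ_k f^u_{s,k} f^v_{s,k}`. -/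
noncomputable def hval (s : BlockArray a b t) (u v : ℕ) : ℝ :=
  ∑ k : Fin t, (fc s u k : ℝ) * (fc s v k : ℝ)

noncomputable def h00 (s : BlockArray a b t) : ℝ := hval s 0 0

noncomputable def h1 (s : BlockArray a b t) : ℝ :=
  hval s 0 1 + hval s 0 2 + hval s 0 3 + hval s 0 4

noncomputable def h2 (s : BlockArray a b t) : ℝ :=
  hval s 1 1 + hval s 2 2 + hval s 3 3 + hval s 4 4

noncomputable def h3 (s : BlockArray a b t) : ℝ :=
  hval s 1 2 + hval s 1 3 + hval s 1 4 + hval s 2 3 + hval s 2 4 + hval s 3 4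

/-- `z¹_{s,r}`: horizontally adjacent pairs of plots receiving the same treatment. -/
noncomputable def zr1 (s : BlockArray a b t) : ℕ :=
  {qr : Plot a b × Plot a b |
    qr.1.1 = qr.2.1 ∧ qr.1.2.val + 1 = qr.2.2.val ∧ s qr.1 = s qr.2}.ncard

noncomputable def zr2 (s : BlockArray a b t) : ℕ :=
  {qr : Plot a b × Plot a b |
    qr.1.1 = qr.2.1 ∧ qr.1.2.val + 2 = qr.2.2.val ∧ s qr.1 = s qr.2}.ncard

noncomputable def zc1 (s : BlockArray a b t) : ℕ :=
  {qr : Plot a b × Plot a b |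
    qr.1.2 = qr.2.2 ∧ qr.1.1.val + 1 = qr.2.1.val ∧ s qr.1 = s qr.2}.ncard

noncomputable def zc2 (s : BlockArray a b t) : ℕ :=
  {qr : Plot a b × Plot a b |
    qr.1.2 = qr.2.2 ∧ qr.1.1.val + 2 = qr.2.1.val ∧ s qr.1 = s qr.2}.ncard

/-- pairs `(i,j)`, `(i−1,j+1)` with the same treatment. -/
noncomputable def zd1 (s : BlockArray a b t) : ℕ :=
  {qr : Plot a b × Plot a b |
    qr.2.1.val + 1 = qr.1.1.val ∧ qr.1.2.val + 1 = qr.2.2.val ∧ s qr.1 = s qr.2}.ncard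

/-- pairs `(i,j)`, `(i+1,j+1)` with the same treatment. -/
noncomputable def zd2 (s : BlockArray a b t) : ℕ :=
  {qr : Plot a b × Plot a b |
    qr.1.1.val + 1 = qr.2.1.val ∧ qr.1.2.val + 1 = qr.2.2.val ∧ s qr.1 = s qr.2}.ncard

noncomputable def z1 (s : BlockArray a b t) : ℝ := 2 * zr1 s + 2 * zc1 s

noncomputable def z2 (s : BlockArray a b t) : ℝ :=
  2 * zr2 s + 2 * zc2 s + 4 * zd1 s + 4 * zd2 s

/-- `η = 4p − 2a − 2b − 2(8ab − 7a − 7b + 4)/t + 4(2p − a − b)²/(pt)` where `p = ab`. -/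
noncomputable def eta (a b t : ℕ) : ℝ :=
  4 * ((a : ℝ) * b) - 2 * a - 2 * b - 2 * (8 * (a : ℝ) * b - 7 * a - 7 * b + 4) / t +
    4 * (2 * (a : ℝ) * b - a - b) ^ 2 / (((a : ℝ) * b) * t)

/-- A corner plot of the `a × b` block. -/
def IsCorner (q : Plot a b) : Prop :=
  (q.1.val = 0 ∨ q.1.val + 1 = a) ∧ (q.2.val = 0 ∨ q.2.val + 1 = b)

/-- Treatment `k` is significant in `s`: it occupies exactly two plots, which are
neighbors, at least one of them being a corner plot. -/
def Significant (s : BlockArray a b t) (k : Fin t) : Prop :=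
  ∃ u v : Plot a b, u ≠ v ∧ {q : Plot a b | s q = k} = {u, v} ∧
    Neighbor u v ∧ (IsCorner u ∨ IsCorner v)

/-- Treatment `k` is strictly significant in `s`: both of its two plots are corners. -/
def StrictSignificant (s : BlockArray a b t) (k : Fin t) : Prop :=
  ∃ u v : Plot a b, u ≠ v ∧ {q : Plot a b | s q = k} = {u, v} ∧
    Neighbor u v ∧ IsCorner u ∧ IsCorner v

/-- `Q_i`: block arrays with exactly `i` significant treatments in which every other
treatment appears at most once. -/
def Qset (a b t : ℕ) (i : ℕ) : Set (BlockArray a b t) :=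
  {s | {k : Fin t | Significant s k}.ncard = i ∧
       ∀ k : Fin t, ¬ Significant s k → f0 s k ≤ 1}

/-- `Q_j*`: members of `Q_j` whose significant treatments are all strictly significant. -/
def QsetStar (a b t : ℕ) (j : ℕ) : Set (BlockArray a b t) :=
  {s | s ∈ Qset a b t j ∧ ∀ k : Fin t, Significant s k → StrictSignificant s k}

/-- Treatment `k` is connected in `s`. -/
def ConnectedIn (s : BlockArray a b t) (k : Fin t) : Prop :=
  ∀ q r : Plot a b, s q = k → s r = k →
    Relation.ReflTransGen (fun u v => Neighbor u v ∧ s u = k ∧ s v = k) q r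

/-- The symmetrization `ξ*` of a measure `ξ`: `p*_s = (t!)⁻¹ Σ_σ p_{σ∘s}`. -/
noncomputable def symmetrize (ξ : BlockArray a b t → ℝ) : BlockArray a b t → ℝ :=
  fun s => (∑ σ : Equiv.Perm (Fin t), ξ (fun q => σ (s q))) / (Nat.factorial t)

noncomputable def avgM {t : ℕ} (A : Matrix (Fin t) (Fin t) ℝ) : Matrix (Fin t) (Fin t) ℝ :=
  ((Nat.factorial t : ℝ))⁻¹ • ∑ σ : Equiv.Perm (Fin t), A.submatrix σ σ

/-- quadratic matrix function for one array -/
noncomputable def qs (W : Matrix (Plot a b) (Plot a b) ℝ) (s : BlockArray a b t)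
    (X : Matrix (Fin t) (Fin t) ℝ) : Matrix (Fin t) (Fin t) ℝ :=
  (Tmat s + Fmat s * X)ᵀ * W * (Tmat s + Fmat s * X)

noncomputable def Qf (W : Matrix (Plot a b) (Plot a b) ℝ) (ξ : BlockArray a b t → ℝ)
    (X : Matrix (Fin t) (Fin t) ℝ) : Matrix (Fin t) (Fin t) ℝ :=
  ∑ s, ξ s • qs W s X

theorem Btilde_psd (ha : 2 ≤ a) (hb : 3 ≤ b)
    (Sig : Matrix (Plot a b) (Plot a b) ℝ) (hSig : Sig.PosDef) :
    (Btilde Sig).PosSemidef ∧ Btilde Sig *ᵥ (fun _ => 1) = 0 := by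
  have hK := hSig.inv
  set K := Sig⁻¹ with hKdef
  have hKs : Kᵀ = K := by simpa using hK.isHermitian.eq
  set k : ℝ := ∑ i, ∑ j, K i j with hk
  have hkpos : 0 < k := by
    have h1 : (fun _ : Plot a b => (1 : ℝ)) ≠ 0 := by
      intro h
      have := congrFun h (⟨0, by omega⟩, ⟨0, by omega⟩)
      simp at this
    have := hK.dotProduct_mulVec_pos h1
    simpa [dotProduct, mulVec, hk] using this
  have hJ : Jmat (Plot a b) * K * Jmat (Plot a b) = k • Jmat (Plot a b) := by
    ext i j
    simp [Matrix.mul_apply, Jmat, hk]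
    rw [Finset.sum_comm]
  have hJs : (Jmat (Plot a b))ᵀ = Jmat (Plot a b) := by ext i j; simp [Jmat]
  have hB : Btilde Sig = K - k⁻¹ • (K * Jmat (Plot a b) * K) := rfl
  constructor
  · have h : Btilde Sig = (1 - k⁻¹ • (Jmat (Plot a b) * K))ᴴ * K * (1 - k⁻¹ • (Jmat (Plot a b) * K)) := by
      rw [hB, conjTranspose_eq_transpose_of_trivial, transpose_sub, transpose_smul, transpose_mul,
        hKs, hJs, transpose_one]
      have e : K * Jmat (Plot a b) * K * (Jmat (Plot a b) * K) = k • (K * Jmat (Plot a b) * K) := by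
        calc _ = K * (Jmat (Plot a b) * K * Jmat (Plot a b)) * K := by simp only [Matrix.mul_assoc]
          _ = _ := by rw [hJ]; simp
      simp only [Matrix.sub_mul, Matrix.mul_sub, Matrix.one_mul, Matrix.mul_one, Matrix.smul_mul,
        Matrix.mul_smul, e, smul_smul]
      rw [inv_mul_cancel₀ hkpos.ne', one_smul, ← Matrix.mul_assoc, sub_self, smul_zero, sub_zero]
    rw [h]
    exact hK.posSemidef.conjTranspose_mul_mul_same _
  · have h1 : Jmat (Plot a b) *ᵥ (K *ᵥ (fun _ => 1)) = k • (fun _ => 1) := by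
      ext i
      simp [mulVec, dotProduct, Jmat, hk]
    rw [hB, sub_mulVec, smul_mulVec, ← mulVec_mulVec, ← mulVec_mulVec, h1, mulVec_smul, smul_smul,
      inv_mul_cancel₀ hkpos.ne', one_smul, sub_self]

theorem qs_psd {W : Matrix (Plot a b) (Plot a b) ℝ} (hW : W.PosSemidef) (s : BlockArray a b t) (X) :
    (qs W s X).PosSemidef := by
  have := hW.conjTranspose_mul_mul_same (Tmat s + Fmat s * X)
  rwa [conjTranspose_eq_transpose_of_trivial] at this

theorem Cs11_psd {W : Matrix (Plot a b) (Plot a b) ℝ} (hW : W.PosSemidef) (s : BlockArray a b t) :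
    (Cs11 W s).PosSemidef := by
  have := hW.conjTranspose_mul_mul_same (Fmat s)
  rwa [conjTranspose_eq_transpose_of_trivial] at this

theorem sum_smul_psd {ι : Type*} (S : Finset ι) (c : ι → ℝ) (hc : ∀ i, 0 ≤ c i)
    (A : ι → Matrix (Fin t) (Fin t) ℝ) (hA : ∀ i, (A i).PosSemidef) :
    (∑ i ∈ S, c i • A i).PosSemidef :=
  posSemidef_sum S fun i _ => (hA i).smul (hc i)

theorem Cm11_psd {W : Matrix (Plot a b) (Plot a b) ℝ} (hW : W.PosSemidef)
    {ξ : BlockArray a b t → ℝ} (h : ∀ s, 0 ≤ ξ s) : (Cm11 W ξ).PosSemidef :=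
  sum_smul_psd _ _ h _ fun s => Cs11_psd hW s

theorem Qf_psd {W : Matrix (Plot a b) (Plot a b) ℝ} (hW : W.PosSemidef)
    {ξ : BlockArray a b t → ℝ} (h : ∀ s, 0 ≤ ξ s) (X) : (Qf W ξ X).PosSemidef :=
  sum_smul_psd _ _ h _ fun s => qs_psd hW s X

theorem psd_symm {n : Type*} {A : Matrix n n ℝ} (h : A.PosSemidef) : Aᵀ = A := by
  simpa using h.isHermitian.eq

theorem Qf_expand {W : Matrix (Plot a b) (Plot a b) ℝ} (hW : Wᵀ = W)
    (ξ : BlockArray a b t → ℝ) (X) :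
    Qf W ξ X = Cm00 W ξ + Cm01 W ξ * X + Xᵀ * (Cm01 W ξ)ᵀ + Xᵀ * Cm11 W ξ * X := by
  simp only [Qf, Cm00, Cm01, Cm11, Matrix.sum_mul, Matrix.mul_sum, transpose_sum,
    ← Finset.sum_add_distrib]
  refine Finset.sum_congr rfl fun s _ => ?_
  simp only [transpose_smul, Matrix.smul_mul, Matrix.mul_smul, ← smul_add]
  congr 1
  simp only [qs, Cs00, Cs01, Cs11, transpose_add, transpose_mul, transpose_transpose, hW,
    Matrix.add_mul, Matrix.mul_add, Matrix.mul_assoc]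
  abel

theorem ker_incl {W : Matrix (Plot a b) (Plot a b) ℝ} (hW : W.PosSemidef)
    {ξ : BlockArray a b t → ℝ} (h : ∀ s, 0 ≤ ξ s) (v : Fin t → ℝ) (hv : Cm11 W ξ *ᵥ v = 0) :
    Cm01 W ξ *ᵥ v = 0 := by
  have h0 : v ⬝ᵥ (Cm11 W ξ *ᵥ v) = 0 := by rw [hv]; simp
  have hterm : ∀ s, v ⬝ᵥ (Cs11 W s *ᵥ v) = (Fmat s *ᵥ v) ⬝ᵥ (W *ᵥ (Fmat s *ᵥ v)) := by
    intro s
    rw [Cs11, ← mulVec_mulVec, ← mulVec_mulVec, dotProduct_mulVec, vecMul_transpose]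
  have hnn : ∀ s, 0 ≤ (Fmat s *ᵥ v) ⬝ᵥ (W *ᵥ (Fmat s *ᵥ v)) := by
    intro s
    simpa using hW.dotProduct_mulVec_nonneg (Fmat s *ᵥ v)
  rw [Cm11, sum_mulVec, dotProduct_sum] at h0
  simp only [smul_mulVec, dotProduct_smul, hterm, smul_eq_mul] at h0
  rw [Finset.sum_eq_zero_iff_of_nonneg (fun s _ => mul_nonneg (h s) (hnn s))] at h0
  rw [Cm01, sum_mulVec]
  refine Finset.sum_eq_zero fun s hs => ?_
  rcases mul_eq_zero.1 (h0 s hs) with h1 | h1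
  · simp [h1]
  · have : W *ᵥ (Fmat s *ᵥ v) = 0 := by
      rw [← hW.dotProduct_mulVec_zero_iff]; simpa using h1
    rw [smul_mulVec, Cs01, ← mulVec_mulVec, ← mulVec_mulVec, this]
    simp

theorem range_incl {W : Matrix (Plot a b) (Plot a b) ℝ} (hW : W.PosSemidef)
    {ξ : BlockArray a b t → ℝ} (h : ∀ s, 0 ≤ ξ s) {G} (hG : IsGenInv (Cm11 W ξ) G) :
    Cm11 W ξ * G * (Cm01 W ξ)ᵀ = (Cm01 W ξ)ᵀ := by
  have hs := psd_symm (Cm11_psd hW h)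
  have h1 : Cm11 W ξ * (1 - Gᵀ * Cm11 W ξ) = 0 := by
    have := congrArg transpose hG
    simp only [transpose_mul, hs] at this
    rw [Matrix.mul_sub, this, Matrix.mul_one, sub_self]
  have h2 : Cm01 W ξ * (1 - Gᵀ * Cm11 W ξ) = 0 := by
    ext i j
    have hc : Cm11 W ξ *ᵥ (fun k => (1 - Gᵀ * Cm11 W ξ) k j) = 0 := by
      ext l
      exact congrFun (congrFun h1 l) j
    exact congrFun (ker_incl hW h _ hc) i
  have h3 := congrArg transpose h2
  simp only [Matrix.mul_sub, Matrix.mul_one, transpose_sub, transpose_mul, transpose_transpose, hs,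
    transpose_zero] at h3
  exact (sub_eq_zero.1 h3).symm

theorem info_eq {W : Matrix (Plot a b) (Plot a b) ℝ} (hW : W.PosSemidef)
    {ξ : BlockArray a b t → ℝ} (h : ∀ s, 0 ≤ ξ s) {G} (hG : IsGenInv (Cm11 W ξ) G) (X) :
    Qf W ξ X - InfoMat W ξ G =
      (X + G * (Cm01 W ξ)ᵀ)ᵀ * Cm11 W ξ * (X + G * (Cm01 W ξ)ᵀ) := by
  have hs := psd_symm (Cm11_psd hW h)
  have h1 := range_incl hW h hG
  have h2 : Cm01 W ξ * Gᵀ * Cm11 W ξ = Cm01 W ξ := by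
    have := congrArg transpose h1
    simpa [transpose_mul, hs, Matrix.mul_assoc] using this
  rw [Qf_expand (psd_symm hW), InfoMat]
  simp only [transpose_add, transpose_mul, transpose_transpose, Matrix.add_mul, Matrix.mul_add]
  rw [h2, show Xᵀ * Cm11 W ξ * (G * (Cm01 W ξ)ᵀ) = Xᵀ * (Cm11 W ξ * G * (Cm01 W ξ)ᵀ) by
    simp only [Matrix.mul_assoc], h1, Matrix.mul_assoc (Cm01 W ξ) G]
  abel

theorem info_le {W : Matrix (Plot a b) (Plot a b) ℝ} (hW : W.PosSemidef)
    {ξ : BlockArray a b t → ℝ} (h : ∀ s, 0 ≤ ξ s) {G} (hG : IsGenInv (Cm11 W ξ) G) (X) :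
    (Qf W ξ X - InfoMat W ξ G).PosSemidef := by
  rw [info_eq hW h hG]
  have := (Cm11_psd hW h).conjTranspose_mul_mul_same (X + G * (Cm01 W ξ)ᵀ)
  rwa [conjTranspose_eq_transpose_of_trivial] at this

theorem info_attained {W : Matrix (Plot a b) (Plot a b) ℝ} (hW : W.PosSemidef)
    {ξ : BlockArray a b t → ℝ} (h : ∀ s, 0 ≤ ξ s) {G} (hG : IsGenInv (Cm11 W ξ) G) :
    InfoMat W ξ G = Qf W ξ (-(G * (Cm01 W ξ)ᵀ)) := by
  have := info_eq hW h hG (-(G * (Cm01 W ξ)ᵀ))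
  simp only [neg_add_cancel, Matrix.mul_zero] at this
  exact (sub_eq_zero.1 this).symm

theorem info_symm {W : Matrix (Plot a b) (Plot a b) ℝ} (hW : W.PosSemidef)
    {ξ : BlockArray a b t → ℝ} (h : ∀ s, 0 ≤ ξ s) {G} (hG : IsGenInv (Cm11 W ξ) G) :
    (InfoMat W ξ G).IsSymm := by
  rw [info_attained hW h hG]
  exact psd_symm (Qf_psd hW h _)

theorem Tmat_one (s : BlockArray a b t) : Tmat s *ᵥ (fun _ => 1) = fun _ => 1 := by
  ext q
  simp [Tmat, mulVec, dotProduct]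

theorem info_one {W : Matrix (Plot a b) (Plot a b) ℝ} (hW : W.PosSemidef)
    (hW1 : W *ᵥ (fun _ => 1) = 0) (ξ : BlockArray a b t → ℝ) (G) :
    InfoMat W ξ G *ᵥ (fun _ => 1) = 0 := by
  have h00 : Cm00 W ξ *ᵥ (fun _ => 1) = 0 := by
    rw [Cm00, sum_mulVec]
    refine Finset.sum_eq_zero fun s _ => ?_
    rw [smul_mulVec, Cs00, ← mulVec_mulVec, ← mulVec_mulVec, Tmat_one, hW1]
    simp
  have h01 : (Cm01 W ξ)ᵀ *ᵥ (fun _ => 1) = 0 := by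
    rw [Cm01, transpose_sum, sum_mulVec]
    refine Finset.sum_eq_zero fun s _ => ?_
    rw [transpose_smul, smul_mulVec, Cs01, transpose_mul, transpose_mul, psd_symm hW,
      transpose_transpose, ← mulVec_mulVec, ← mulVec_mulVec, Tmat_one, hW1]
    simp
  rw [InfoMat, sub_mulVec, ← mulVec_mulVec, h00, h01]
  simp

/-! permutations -/

theorem Tmat_perm (σ : Equiv.Perm (Fin t)) (s : BlockArray a b t) :
    (Tmat (fun q => σ (s q))) = (Tmat s).submatrix id σ.symm := by
  ext q k
  simp [Tmat, Equiv.eq_symm_apply]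

theorem Fmat_perm (σ : Equiv.Perm (Fin t)) (s : BlockArray a b t) :
    (Fmat (fun q => σ (s q))) = (Fmat s).submatrix id σ.symm := by
  rw [Fmat, Tmat_perm, Fmat]
  rfl

theorem qs_perm (W : Matrix (Plot a b) (Plot a b) ℝ) (σ : Equiv.Perm (Fin t))
    (s : BlockArray a b t) (X) :
    qs W (fun q => σ (s q)) X = (qs W s (X.submatrix σ σ)).submatrix σ.symm σ.symm := by
  have h : Tmat (fun q => σ (s q)) + Fmat (fun q => σ (s q)) * X
      = (Tmat s + Fmat s * X.submatrix σ σ).submatrix id σ.symm := by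
    rw [Tmat_perm, Fmat_perm]
    ext q k
    simp only [Matrix.add_apply, submatrix_apply, Matrix.mul_apply, id, Equiv.apply_symm_apply]
    congr 1
    rw [← Equiv.sum_comp σ.symm (fun j => Fmat s q j * X (σ j) k)]
    simp only [Equiv.apply_symm_apply]
  rw [qs, h, qs]
  rfl

theorem sum_perm_array {M : Type*} [AddCommMonoid M] (σ : Equiv.Perm (Fin t))
    (f : BlockArray a b t → M) : ∑ s : BlockArray a b t, f (fun q => σ (s q)) = ∑ s, f s :=
  Equiv.sum_comp (Equiv.arrowCongr (Equiv.refl (Plot a b)) σ) f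

theorem symmetrize_measure {ξ : BlockArray a b t → ℝ} (h : IsMeasure ξ) :
    IsMeasure (symmetrize ξ) := by
  constructor
  · intro s
    exact div_nonneg (Finset.sum_nonneg fun σ _ => h.1 _) (by positivity)
  · have hf : (Nat.factorial t : ℝ) ≠ 0 := by positivity
    simp only [symmetrize]
    rw [← Finset.sum_div, Finset.sum_comm]
    simp only [sum_perm_array, h.2]
    simp [Fintype.card_perm, hf]

theorem symmetrize_symm (ξ : BlockArray a b t → ℝ) : IsSymmetricMeasure (symmetrize ξ) := by
  intro τ s
  simp only [symmetrize]
  congr 1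
  exact Equiv.sum_comp (Equiv.mulRight τ) (fun σ : Equiv.Perm (Fin t) => ξ (fun q => σ (s q)))

theorem symmetrize_of_symm {ξ : BlockArray a b t → ℝ} (h : IsSymmetricMeasure ξ) :
    symmetrize ξ = ξ := by
  have hf : (Nat.factorial t : ℝ) ≠ 0 := by positivity
  ext s
  simp only [symmetrize, h _ s]
  simp [Fintype.card_perm]
  field_simp

theorem Qf_symmetrize (W : Matrix (Plot a b) (Plot a b) ℝ) (ξ : BlockArray a b t → ℝ) (X) :
    Qf W (symmetrize ξ) X = ((Nat.factorial t : ℝ))⁻¹ •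
      ∑ σ : Equiv.Perm (Fin t),
        (Qf W ξ (X.submatrix σ.symm σ.symm)).submatrix σ σ := by
  have h1 : ∀ σ : Equiv.Perm (Fin t), ∑ s, ξ (fun q => σ (s q)) • qs W s X
      = (Qf W ξ (X.submatrix σ.symm σ.symm)).submatrix σ σ := by
    intro σ
    rw [← sum_perm_array σ.symm]
    simp only [Equiv.apply_symm_apply, qs_perm, Equiv.symm_symm]
    ext i j
    simp [Qf, Matrix.sum_apply]
  simp only [← h1]
  rw [Finset.sum_comm, Finset.smul_sum]
  simp only [Qf, symmetrize, ← Finset.sum_smul, smul_smul, div_eq_inv_mul]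

theorem avg_le_info {W : Matrix (Plot a b) (Plot a b) ℝ} (hW : W.PosSemidef)
    {ξ : BlockArray a b t → ℝ} (h : IsMeasure ξ) {G Gs}
    (hG : IsGenInv (Cm11 W ξ) G) (hGs : IsGenInv (Cm11 W (symmetrize ξ)) Gs) :
    (InfoMat W (symmetrize ξ) Gs - avgM (InfoMat W ξ G)).PosSemidef := by
  rw [info_attained hW (symmetrize_measure h).1 hGs, Qf_symmetrize, avgM, ← smul_sub,
    ← Finset.sum_sub_distrib]
  refine PosSemidef.smul (posSemidef_sum _ fun σ _ => ?_) (by positivity)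
  exact (info_le hW h.1 hG _).submatrix σ

theorem avgM_symm {A : Matrix (Fin t) (Fin t) ℝ} (hA : A.IsSymm) : (avgM A).IsSymm := by
  rw [avgM, IsSymm, transpose_smul, transpose_sum]
  congr 1
  refine Finset.sum_congr rfl fun σ _ => ?_
  rw [transpose_submatrix, hA.eq]

theorem phi_avg {Φ : Matrix (Fin t) (Fin t) ℝ → ℝ} (hΦ : GoodPhi t Φ)
    {A : Matrix (Fin t) (Fin t) ℝ} (hA : A.IsSymm) : Φ A ≤ Φ (avgM A) := by
  obtain ⟨h1, -, h3⟩ := hΦ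
  have hf : (Nat.factorial t : ℝ) ≠ 0 := by positivity
  have hc : ConcaveOn ℝ {A : Matrix (Fin t) (Fin t) ℝ | A.IsSymm} Φ := by
    constructor
    · intro A hA B hB x y _ _ _
      exact (hA.smul x).add (hB.smul y)
    · intro A hA B hB x y hx hy hxy
      obtain rfl : y = 1 - x := by linarith
      exact h1 A B hA hB x hx (by linarith)
  have := hc.le_map_sum (t := Finset.univ) (w := fun _ : Equiv.Perm (Fin t) => ((Nat.factorial t : ℝ))⁻¹)
    (p := fun σ => A.submatrix σ σ) (fun _ _ => by positivity)
    (by simp [Fintype.card_perm, hf])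
    (fun σ _ => hA.submatrix σ)
  rw [← Finset.smul_sum, ← Finset.smul_sum] at this
  simp only [h3] at this
  simpa [Fintype.card_perm, hf, avgM] using this

theorem avgM_perm (A : Matrix (Fin t) (Fin t) ℝ) (τ : Equiv.Perm (Fin t)) (i j) :
    avgM A (τ i) (τ j) = avgM A i j := by
  simp only [avgM, Matrix.smul_apply, Matrix.sum_apply, submatrix_apply]
  congr 1
  exact Equiv.sum_comp (Equiv.mulRight τ) (fun σ : Equiv.Perm (Fin t) => A (σ i) (σ j))

theorem avgM_row {A : Matrix (Fin t) (Fin t) ℝ} (hA : A *ᵥ (fun _ => 1) = 0) (i) :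
    ∑ j, avgM A i j = 0 := by
  simp only [avgM, Matrix.smul_apply, Matrix.sum_apply, submatrix_apply]
  rw [← Finset.smul_sum, Finset.sum_comm]
  rw [Finset.sum_eq_zero, smul_zero]
  intro σ _
  have := congrFun hA (σ i)
  rw [Equiv.sum_comp σ (fun j => A (σ i) j)]
  simpa [mulVec, dotProduct] using this

theorem avgM_trace (A : Matrix (Fin t) (Fin t) ℝ) : (avgM A).trace = A.trace := by
  have hf : (Nat.factorial t : ℝ) ≠ 0 := by positivity
  have : ∀ σ : Equiv.Perm (Fin t), (A.submatrix σ σ).trace = A.trace := by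
    intro σ
    exact Equiv.sum_comp σ (fun j => A j j)
  rw [avgM, trace_smul, trace_sum]
  simp [this, Fintype.card_perm, hf]

theorem avgM_psd (ht : 2 ≤ t) {A : Matrix (Fin t) (Fin t) ℝ}
    (hA : A *ᵥ (fun _ => 1) = 0) (htr : 0 ≤ A.trace) : (avgM A).PosSemidef := by
  have htr' : (2 : ℝ) ≤ t := by exact_mod_cast ht
  set B := avgM A with hB
  set d := A.trace / t with hd
  have hd0 : 0 ≤ d := by positivity
  have hdiag' : ∀ i j, B i i = B j j := by
    intro i j
    have := avgM_perm A (Equiv.swap i j) i i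
    simpa using this.symm
  have hdiag : ∀ i, B i i = d := by
    intro i
    have : ∑ j, B j j = A.trace := avgM_trace A
    rw [Finset.sum_congr rfl (fun j _ => hdiag' j i)] at this
    simp at this
    rw [hd, ← this]; field_simp
  have hoff : ∀ i j, i ≠ j → (t - 1 : ℝ) * B i j = -d := by
    intro i j hij
    have h1 : ∀ k, k ≠ i → B i k = B i j := by
      intro k hk
      have := avgM_perm A (Equiv.swap k j) i k
      rw [Equiv.swap_apply_left, Equiv.swap_apply_of_ne_of_ne hk.symm hij] at this
      exact this.symm
    have h2 := avgM_row hA i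
    rw [← hB, ← Finset.add_sum_erase _ _ (Finset.mem_univ i), hdiag,
      Finset.sum_congr rfl (fun k hk => h1 k (Finset.ne_of_mem_erase hk))] at h2
    rw [Finset.sum_const, Finset.card_erase_of_mem (Finset.mem_univ i), nsmul_eq_mul] at h2
    simp only [Finset.card_univ, Fintype.card_fin] at h2
    rw [Nat.cast_sub (by omega)] at h2
    push_cast at h2
    linarith
  set e := d / (t - 1 : ℝ) with he
  have ht1 : (0 : ℝ) < t - 1 := by linarith
  have he0 : 0 ≤ e := by positivity
  have hform : B = e • ((t : ℝ) • (1 : Matrix (Fin t) (Fin t) ℝ) - Jmat (Fin t)) := by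
    ext i j
    by_cases hij : i = j
    · subst hij
      simp [Jmat, hdiag, he]
      field_simp
    · have := hoff i j hij
      simp [Jmat, hij, he]
      field_simp
      linarith
  rw [hform]
  refine PosSemidef.smul ?_ he0
  refine PosSemidef.of_dotProduct_mulVec_nonneg ?_ ?_
  · ext i j
    simp [Jmat, Matrix.one_apply, eq_comm]
  · intro x
    have := sq_sum_le_card_mul_sum_sq (s := Finset.univ) (f := x)
    have h2 : star x ⬝ᵥ (((t : ℝ) • (1 : Matrix (Fin t) (Fin t) ℝ) - Jmat (Fin t)) *ᵥ x)
        = t * ∑ i, x i ^ 2 - (∑ i, x i) ^ 2 := by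
      rw [sub_mulVec, dotProduct_sub, smul_mulVec, one_mulVec, dotProduct_smul]
      congr 1
      · simp [dotProduct, sq]
      · simp [dotProduct, mulVec, Jmat, sq, Finset.sum_mul]
    rw [h2]
    simpa using this

/-- the trace criterion -/
noncomputable def phiTr (W : Matrix (Plot a b) (Plot a b) ℝ) (ξ : BlockArray a b t → ℝ) : ℝ :=
  ⨅ X : Matrix (Fin t) (Fin t) ℝ, (Qf W ξ X).trace

theorem bdd_tr {W : Matrix (Plot a b) (Plot a b) ℝ} (hW : W.PosSemidef)
    {ξ : BlockArray a b t → ℝ} (h : ∀ s, 0 ≤ ξ s) :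
    BddBelow (Set.range fun X : Matrix (Fin t) (Fin t) ℝ => (Qf W ξ X).trace) := by
  refine ⟨0, ?_⟩
  rintro _ ⟨X, rfl⟩
  exact (Qf_psd hW h X).trace_nonneg

theorem exists_max {W : Matrix (Plot a b) (Plot a b) ℝ} (hW : W.PosSemidef) (ht : 2 ≤ t) :
    ∃ ξ : BlockArray a b t → ℝ, IsMeasure ξ ∧ ∀ η : BlockArray a b t → ℝ, IsMeasure η → phiTr W η ≤ phiTr W ξ := by
  have : NeZero t := ⟨by omega⟩
  have hne : (stdSimplex ℝ (BlockArray a b t)).Nonempty :=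
    ⟨_, single_mem_stdSimplex ℝ (fun _ => (0 : Fin t))⟩
  have husc : UpperSemicontinuousOn (fun ξ : BlockArray a b t → ℝ => phiTr W ξ)
      (stdSimplex ℝ (BlockArray a b t)) := by
    refine upperSemicontinuousOn_ciInf (fun ξ hξ => bdd_tr hW hξ.1) fun X => ?_
    refine Continuous.upperSemicontinuous ?_ |>.upperSemicontinuousOn _
    simp only [Qf, trace_sum, trace_smul]
    fun_prop
  obtain ⟨ξ, hξ, hmax⟩ := husc.exists_isMaxOn hne (isCompact_stdSimplex ℝ _)
  exact ⟨ξ, hξ, fun η hη => hmax hη⟩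

theorem phiTr_symmetrize {W : Matrix (Plot a b) (Plot a b) ℝ} (hW : W.PosSemidef)
    {ξ : BlockArray a b t → ℝ} (h : IsMeasure ξ) : phiTr W ξ ≤ phiTr W (symmetrize ξ) := by
  refine le_ciInf fun X => ?_
  have hf : (0 : ℝ) < (Nat.factorial t : ℝ) := by positivity
  rw [Qf_symmetrize, trace_smul, trace_sum, smul_eq_mul, inv_mul_eq_div, le_div_iff₀ hf]
  have h1 : ∀ σ : Equiv.Perm (Fin t),
      phiTr W ξ ≤ ((Qf W ξ (X.submatrix σ.symm σ.symm)).submatrix σ σ).trace := by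
    intro σ
    have e : ((Qf W ξ (X.submatrix σ.symm σ.symm)).submatrix σ σ).trace
        = (Qf W ξ (X.submatrix σ.symm σ.symm)).trace :=
      Equiv.sum_comp σ (fun j => Qf W ξ (X.submatrix σ.symm σ.symm) j j)
    rw [e]
    exact ciInf_le (bdd_tr hW h.1) _
  have := Finset.sum_le_sum (s := Finset.univ) fun σ _ => h1 σ
  simp only [Finset.sum_const, Finset.card_univ, Fintype.card_perm, Fintype.card_fin,
    nsmul_eq_mul] at this
  linarith

theorem trace_info {W : Matrix (Plot a b) (Plot a b) ℝ} (hW : W.PosSemidef)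
    {ξ : BlockArray a b t → ℝ} (h : ∀ s, 0 ≤ ξ s) {G} (hG : IsGenInv (Cm11 W ξ) G) :
    (InfoMat W ξ G).trace = phiTr W ξ := by
  apply le_antisymm
  · refine le_ciInf fun X => ?_
    have := (info_le hW h hG X).trace_nonneg
    rw [trace_sub] at this
    linarith
  · rw [info_attained hW h hG]
    exact ciInf_le (bdd_tr hW h) _

theorem avgM_sub (A B : Matrix (Fin t) (Fin t) ℝ) : avgM A - avgM B = avgM (A - B) := by
  simp only [avgM, ← smul_sub, ← Finset.sum_sub_distrib]
  rfl

/-- there is a symmetric universally optimal measure; moreover the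
symmetrization of any measure is a symmetric measure whose information matrix dominates
that of the original measure under every criterion `Φ`. -/
theorem exists_symmetric_universally_optimal
    (a b t : ℕ) (ha : 2 ≤ a) (hab : a ≤ b) (hb : 3 ≤ b) (ht : 2 ≤ t)
    (Sig : Matrix (Plot a b) (Plot a b) ℝ) (hSig : Sig.PosDef) :
    (∃ ξ : BlockArray a b t → ℝ, IsMeasure ξ ∧ IsSymmetricMeasure ξ ∧
       UnivOptimal (Btilde Sig) ξ) ∧
    (∀ ξ : BlockArray a b t → ℝ, IsMeasure ξ →
       IsMeasure (symmetrize ξ) ∧ IsSymmetricMeasure (symmetrize ξ) ∧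
       (∀ Φ : Matrix (Fin t) (Fin t) ℝ → ℝ, GoodPhi t Φ →
          ∀ Gstar G : Matrix (Fin t) (Fin t) ℝ,
            IsGenInv (Cm11 (Btilde Sig) (symmetrize ξ)) Gstar →
            IsGenInv (Cm11 (Btilde Sig) ξ) G →
            Φ (InfoMat (Btilde Sig) ξ G) ≤ Φ (InfoMat (Btilde Sig) (symmetrize ξ) Gstar))) := by
  obtain ⟨hW, hW1⟩ := Btilde_psd ha hb Sig hSig
  set W := Btilde Sig with hWdef
  constructor
  · obtain ⟨ξ₀, h0, hmax⟩ := exists_max (t := t) hW ht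
    have hm := symmetrize_measure h0
    have hs := symmetrize_symm ξ₀
    refine ⟨symmetrize ξ₀, hm, hs, ?_⟩
    intro η hη G H hG hH Φ hΦ
    have s1 := info_symm hW hη.1 hH
    have s2 := info_symm hW hm.1 hG
    refine (phi_avg hΦ s1).trans ?_
    refine (hΦ.2.1 _ _ (avgM_symm s1) (avgM_symm s2) ?_).trans
      (hΦ.2.1 _ _ (avgM_symm s2) s2 ?_)
    · rw [avgM_sub]
      refine avgM_psd ht ?_ ?_
      · rw [sub_mulVec, info_one hW hW1, info_one hW hW1, sub_zero]
      · rw [trace_sub, trace_info hW hη.1 hH, trace_info hW hm.1 hG]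
        linarith [hmax η hη, phiTr_symmetrize hW h0]
    · have := avg_le_info hW hm hG (Gs := G) (by rwa [symmetrize_of_symm hs])
      rwa [symmetrize_of_symm hs] at this
  · intro ξ hξ
    refine ⟨symmetrize_measure hξ, symmetrize_symm ξ, ?_⟩
    intro Φ hΦ Gs G hGs hG
    have s1 := info_symm hW hξ.1 hG
    exact (phi_avg hΦ s1).trans (hΦ.2.1 _ _ (avgM_symm s1)
      (info_symm hW (symmetrize_measure hξ).1 hGs) (avg_le_info hW hξ hG hGs))

end TwoDim
end

section
/- For every block array s, one has c_{s11} = tr(B_t F_s'B̃F_s) > 0 and 1_t'F_s'B̃F_s1_t > 0. -/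
open Matrix

namespace TwoDim

variable {a b t : ℕ}

lemma Btilde_quad (Sig : Matrix (Plot a b) (Plot a b) ℝ) (hSig : Sig.PosDef)
    (v : Plot a b → ℝ) (q r : Plot a b) (hv : v q ≠ v r) :
    0 < v ⬝ᵥ (Btilde Sig *ᵥ v) := by
  have hP : (Sig⁻¹).PosDef := hSig.inv
  unfold Btilde
  set P := Sig⁻¹ with hPdef
  have hsym : Pᵀ = P := by
    have := hP.isHermitian.eq
    rwa [Matrix.conjTranspose_eq_transpose_of_trivial] at this
  set o : Plot a b → ℝ := fun _ => 1 with ho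
  have hJ : Jmat (Plot a b) = Matrix.vecMulVec o o := by
    ext i j; simp [Jmat, Matrix.vecMulVec_apply, ho]
  have hsum : (∑ i, ∑ j, P i j) = o ⬝ᵥ (P *ᵥ o) := by
    simp [dotProduct, Matrix.mulVec, ho]
  have hquad : ∀ x : Plot a b → ℝ, x ≠ 0 → 0 < x ⬝ᵥ (P *ᵥ x) := by
    intro x hx
    simpa using hP.dotProduct_mulVec_pos hx
  have ho0 : o ≠ 0 := by
    intro h; have := congrFun h q; simp [ho] at this
  have hσ := hquad o ho0
  rw [hsum, hJ]
  set σ := o ⬝ᵥ (P *ᵥ o) with hσd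
  have hcomm : ∀ x y : Plot a b → ℝ, x ⬝ᵥ (P *ᵥ y) = y ⬝ᵥ (P *ᵥ x) := by
    intro x y
    rw [Matrix.dotProduct_mulVec, ← Matrix.mulVec_transpose, hsym, dotProduct_comm]
  set w := o ⬝ᵥ (P *ᵥ v) with hw
  have hu : v - (w / σ) • o ≠ 0 := by
    intro h
    have h1 := congrFun h q
    have h2 := congrFun h r
    simp [ho] at h1 h2
    apply hv; linarith
  have hpos := hquad _ hu
  have e1 : (v - (w / σ) • o) ⬝ᵥ (P *ᵥ (v - (w / σ) • o)) = v ⬝ᵥ (P *ᵥ v) - σ⁻¹ * w ^ 2 := by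
    simp only [Matrix.mulVec_sub, Matrix.mulVec_smul, sub_dotProduct, dotProduct_sub,
      smul_dotProduct, dotProduct_smul, smul_eq_mul]
    rw [hcomm v o, ← hw, ← hσd]
    field_simp
    ring
  have e2 : v ⬝ᵥ ((P - σ⁻¹ • (P * Matrix.vecMulVec o o * P)) *ᵥ v)
      = v ⬝ᵥ (P *ᵥ v) - σ⁻¹ * w ^ 2 := by
    rw [Matrix.sub_mulVec, dotProduct_sub, Matrix.smul_mulVec, dotProduct_smul,
      ← Matrix.mulVec_mulVec, ← Matrix.mulVec_mulVec, Matrix.vecMulVec_mulVec]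
    rw [← hw, op_smul_eq_smul, Matrix.mulVec_smul, dotProduct_smul, hcomm v o, ← hw]
    simp only [smul_eq_mul]; ring
  rw [e2, ← e1]; exact hpos

lemma Fmat_apply (s : BlockArray a b t) (q : Plot a b) (k : Fin t) :
    Fmat s q k = (((Finset.univ.filter fun r => Neighbor q r ∧ s r = k).card : ℕ) : ℝ) := by
  simp only [Fmat, Matrix.mul_apply, Mmat, Tmat, Matrix.of_apply]
  rw [Finset.card_filter]
  push_cast
  refine Finset.sum_congr rfl fun r _ => ?_
  by_cases h1 : Neighbor q r <;> by_cases h2 : s r = k <;> simp [h1, h2]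

lemma Fmat_rowsum (s : BlockArray a b t) (q : Plot a b) :
    ∑ k, Fmat s q k = (((Finset.univ.filter fun r => Neighbor q r).card : ℕ) : ℝ) := by
  simp only [Fmat, Matrix.mul_apply, Mmat, Tmat, Matrix.of_apply]
  rw [Finset.sum_comm, Finset.card_filter]
  push_cast
  refine Finset.sum_congr rfl fun r _ => ?_
  simp

lemma deg_corner (ha : 2 ≤ a) (hb : 3 ≤ b) :
    (Finset.univ.filter fun r : Plot a b =>
      Neighbor ((⟨0, by omega⟩, ⟨0, by omega⟩) : Plot a b) r).card = 2 := by
  have : (Finset.univ.filter fun r : Plot a b =>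
      Neighbor ((⟨0, by omega⟩, ⟨0, by omega⟩) : Plot a b) r) =
      {((⟨0, by omega⟩, ⟨1, by omega⟩) : Plot a b), (⟨1, by omega⟩, ⟨0, by omega⟩)} := by
    ext ⟨⟨i, hi⟩, ⟨j, hj⟩⟩
    simp [Neighbor, Prod.ext_iff, Fin.ext_iff]
    omega
  rw [this, Finset.card_pair]
  simp [Prod.ext_iff, Fin.ext_iff]

lemma deg_edge (ha : 2 ≤ a) (hb : 3 ≤ b) :
    (Finset.univ.filter fun r : Plot a b =>
      Neighbor ((⟨0, by omega⟩, ⟨1, by omega⟩) : Plot a b) r).card = 3 := by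
  have : (Finset.univ.filter fun r : Plot a b =>
      Neighbor ((⟨0, by omega⟩, ⟨1, by omega⟩) : Plot a b) r) =
      {((⟨0, by omega⟩, ⟨0, by omega⟩) : Plot a b), (⟨0, by omega⟩, ⟨2, by omega⟩),
        (⟨1, by omega⟩, ⟨1, by omega⟩)} := by
    ext ⟨⟨i, hi⟩, ⟨j, hj⟩⟩
    simp [Neighbor, Prod.ext_iff, Fin.ext_iff]
    omega
  rw [this, Finset.card_eq_three]
  refine ⟨_, _, _, ?_, ?_, ?_, rfl⟩ <;> simp [Prod.ext_iff, Fin.ext_iff]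

lemma Bmat_transpose (t : ℕ) : (Bmat (Fin t))ᵀ = Bmat (Fin t) := by
  ext i j
  simp [Bmat, Jmat, Matrix.one_apply, eq_comm]

lemma Bmat_idem (t : ℕ) (ht : 2 ≤ t) : Bmat (Fin t) * Bmat (Fin t) = Bmat (Fin t) := by
  have hJ : Jmat (Fin t) * Jmat (Fin t) = (t : ℝ) • Jmat (Fin t) := by
    ext i j; simp [Jmat, Matrix.mul_apply]
  have h0 : (t : ℝ) ≠ 0 := by positivity
  simp only [Bmat, Fintype.card_fin]
  rw [mul_sub, sub_mul, sub_mul, smul_mul_smul_comm, hJ, smul_smul]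
  rw [mul_assoc, inv_mul_cancel₀ h0]
  simp

lemma FB_apply (s : BlockArray a b t) (q : Plot a b) (k : Fin t) :
    (Fmat s * Bmat (Fin t)) q k = Fmat s q k - (t : ℝ)⁻¹ * ∑ l, Fmat s q l := by
  simp only [Bmat, Fintype.card_fin]
  simp [Matrix.mul_apply, Jmat, sub_mul, Finset.sum_sub_distrib, Matrix.one_apply,
    Finset.mul_sum, mul_comm]

lemma conj_diag {n m : Type*} [Fintype n] [Fintype m] (G : Matrix n m ℝ) (W : Matrix n n ℝ)
    (k : m) : (Gᵀ * W * G) k k = (fun q => G q k) ⬝ᵥ (W *ᵥ fun q => G q k) := by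
  rw [Matrix.mul_assoc, Matrix.mul_apply]
  simp only [dotProduct, Matrix.mulVec, Matrix.mul_apply, Matrix.transpose_apply]

lemma conj_sum {n m : Type*} [Fintype n] [Fintype m] (G : Matrix n m ℝ) (W : Matrix n n ℝ) :
    ∑ k, ∑ l, (Gᵀ * W * G) k l =
      (fun q => ∑ k, G q k) ⬝ᵥ (W *ᵥ fun q => ∑ k, G q k) := by
  have h1 : ∑ k, ∑ l, (Gᵀ * W * G) k l =
      (fun _ => (1 : ℝ)) ⬝ᵥ ((Gᵀ * W * G) *ᵥ fun _ => (1 : ℝ)) := by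
    simp [dotProduct, Matrix.mulVec]
  have h2 : (fun q => ∑ k, G q k) = G *ᵥ (fun _ => (1 : ℝ)) := by
    ext q; simp [dotProduct, Matrix.mulVec]
  rw [h1, h2, ← Matrix.mulVec_mulVec, ← Matrix.mulVec_mulVec, Matrix.dotProduct_mulVec,
    Matrix.vecMul_transpose]

/-- for every block array `s`, `c_{s11} = tr(B_t F_s'B̃F_s) > 0` and
`1_t' F_s'B̃F_s 1_t > 0`. -/
theorem cs11_pos (a b t : ℕ) (ha : 2 ≤ a) (hab : a ≤ b) (hb : 3 ≤ b) (ht : 2 ≤ t)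
    (Sig : Matrix (Plot a b) (Plot a b) ℝ) (hSig : Sig.PosDef)
    (s : BlockArray a b t) :
    0 < Matrix.trace (Bmat (Fin t) * ((Fmat s)ᵀ * Btilde Sig * Fmat s)) ∧
    0 < ∑ k : Fin t, ∑ l : Fin t, ((Fmat s)ᵀ * Btilde Sig * Fmat s) k l := by
  have hc := deg_corner ha hb
  have he := deg_edge ha hb
  set q0 : Plot a b := (⟨0, by omega⟩, ⟨0, by omega⟩) with hq0
  set q1 : Plot a b := (⟨0, by omega⟩, ⟨1, by omega⟩) with hq1
  have r0 := Fmat_rowsum s q0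
  have r1 := Fmat_rowsum s q1
  rw [hc] at r0
  rw [he] at r1
  push_cast at r0 r1
  constructor
  · have hre : Matrix.trace (Bmat (Fin t) * ((Fmat s)ᵀ * Btilde Sig * Fmat s)) =
        ∑ k, ((Fmat s * Bmat (Fin t))ᵀ * Btilde Sig * (Fmat s * Bmat (Fin t))) k k := by
      change _ = Matrix.trace _
      rw [Matrix.transpose_mul, Bmat_transpose]
      conv_lhs => rw [← Bmat_idem t ht, Matrix.mul_assoc, Matrix.trace_mul_comm]
      simp only [Matrix.mul_assoc]
    rw [hre]
    refine Finset.sum_pos (fun k _ => ?_) ⟨⟨0, by omega⟩, Finset.mem_univ _⟩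
    rw [conj_diag]
    refine Btilde_quad Sig hSig _ q0 q1 ?_
    simp only [FB_apply]
    rw [r0, r1, Fmat_apply, Fmat_apply]
    intro h
    generalize (Finset.univ.filter fun r => Neighbor q0 r ∧ s r = k).card = m at h
    generalize (Finset.univ.filter fun r => Neighbor q1 r ∧ s r = k).card = n at h
    have h0 : (t : ℝ) ≠ 0 := by positivity
    field_simp at h
    have h' : (t : ℤ) * ((n : ℤ) - m) = 1 := by
      have : (t : ℝ) * ((n : ℝ) - m) = 1 := by linarith
      exact_mod_cast this
    have := Int.eq_one_or_neg_one_of_mul_eq_one h'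
    omega
  · rw [conj_sum]
    refine Btilde_quad Sig hSig _ q0 q1 ?_
    simp only [r0, r1]
    norm_num

end TwoDim
end
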